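/- arXiv:2201.05693 — 5 statements merged into one kernel-verified Lean document; each statement's English description precedes it below -/
import Mathlib

section
/- The polynomial identity P^D_{n0−1}·P_{n0−1} − P^D_{n0−2}·P_{n0} = a(n0)·a(1)·( ∏_{i=2}^{n0−1} a(i) )² holds (with the empty product equal to 1 when n0 = 2). -/
open Polynomial

/-!
The sequences `k ↦ P k` and `k ↦ PD (k - 1)` satisfy the same three-term recurrence
`u (i + 1) = (X - C (b i)) * u i - C (c i) * u (i - 1)` with `c i = a i * a (n0 + 1 - i)`. The
Casoratian of two solutions is multiplied by `c i` at step `i`, so the left-hand side is the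
Casoratian at `1`, which is `c 1 = a 1 * a n0`, times the product of `c i` over `2 ≤ i ≤ n0 - 1`.
The reflection `i ↦ n0 + 1 - i` of this range turns that product into a square.
-/

section Casoratian

variable {R : Type*} [CommRing R] {u v c d : ℕ → R}

/-- The Casoratian of two sequences, the discrete analogue of the Wronskian: the determinant of
their values at `k` and `k + 1`. -/
def casoratian (u v : ℕ → R) (k : ℕ) : R :=
  u k * v (k + 1) - u (k + 1) * v k

theorem casoratian_succ {k : ℕ}
    (hu : u (k + 2) = d (k + 1) * u (k + 1) - c (k + 1) * u k)
    (hv : v (k + 2) = d (k + 1) * v (k + 1) - c (k + 1) * v k) :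
    casoratian u v (k + 1) = casoratian u v k * c (k + 1) := by
  rw [casoratian, casoratian, hu, hv]
  ring

theorem casoratian_eq_mul_prod_Ioc {m n : ℕ} (hmn : m ≤ n)
    (hu : ∀ i ∈ Finset.Ioc m n, u (i + 1) = d i * u i - c i * u (i - 1))
    (hv : ∀ i ∈ Finset.Ioc m n, v (i + 1) = d i * v i - c i * v (i - 1)) :
    casoratian u v n = casoratian u v m * ∏ i ∈ Finset.Ioc m n, c i := by
  induction n, hmn using Nat.le_induction with
  | base => simp
  | succ n hmn ih =>
    have hlast : n + 1 ∈ Finset.Ioc m (n + 1) := Finset.mem_Ioc.2 ⟨by lia, le_rfl⟩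
    have hsub : Finset.Ioc m n ⊆ Finset.Ioc m (n + 1) := Finset.Ioc_subset_Ioc_right n.le_succ
    rw [casoratian_succ (hu _ hlast) (hv _ hlast),
      ih (fun i hi => hu i (hsub hi)) (fun i hi => hv i (hsub hi)),
      Finset.prod_Ioc_succ_top hmn, mul_assoc]

end Casoratian

theorem prod_Icc_mul_reflect {M : Type*} [CommMonoid M] (f : ℕ → M) (m n : ℕ) :
    ∏ i ∈ Finset.Icc m n, f i * f (m + n - i) = (∏ i ∈ Finset.Icc m n, f i) ^ 2 := by
  have hreflect : ∏ i ∈ Finset.Icc m n, f (m + n - i) = ∏ i ∈ Finset.Icc m n, f i :=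
    Finset.prod_nbij' (m + n - ·) (m + n - ·) (by grind) (by grind) (by grind) (by grind)
      (fun _ _ => rfl)
  rw [Finset.prod_mul_distrib, hreflect, sq]

theorem statement_3_general {R : Type*} [CommRing R] {n : ℕ} (hn : 2 ≤ n) (a d P PD : ℕ → R)
    (hP0 : P 0 = 1) (hP1 : P 1 = d 0)
    (hP : ∀ k, 2 ≤ k → k ≤ n →
      P k = d (k - 1) * P (k - 1) - a (k - 1) * a (n + 2 - k) * P (k - 2))
    (hPD0 : PD 0 = 1) (hPD1 : PD 1 = d 1)
    (hPD : ∀ k, 2 ≤ k → k ≤ n - 1 →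
      PD k = d k * PD (k - 1) - a k * a (n + 1 - k) * PD (k - 2)) :
    PD (n - 1) * P (n - 1) - PD (n - 2) * P n
      = a n * a 1 * (∏ i ∈ Finset.Icc 2 (n - 1), a i) ^ 2 := by
  let c : ℕ → R := fun i => a i * a (n + 1 - i)
  -- Truncation makes `Q 0 = PD 0`, which breaks the recurrence at `1`: hence the start at `2`.
  let Q : ℕ → R := fun k => PD (k - 1)
  have hPrec : ∀ i ∈ Finset.Ioc 1 (n - 1), P (i + 1) = d i * P i - c i * P (i - 1) := by
    intro i hi
    rw [Finset.mem_Ioc] at hi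
    simpa [c] using hP (i + 1) (by lia) (by lia)
  have hQrec : ∀ i ∈ Finset.Ioc 1 (n - 1), Q (i + 1) = d i * Q i - c i * Q (i - 1) := by
    intro i hi
    rw [Finset.mem_Ioc] at hi
    exact hPD i hi.1 hi.2
  have hinit : casoratian P Q 1 = a n * a 1 := by
    have hP2 : P 2 = d 1 * P 1 - a 1 * a n * P 0 := hP 2 le_rfl hn
    simp only [casoratian, Q, Nat.reduceAdd, hP2, hP0, hP1, hPD0, hPD1]
    ring
  have hprod : ∏ i ∈ Finset.Ioc 1 (n - 1), c i = (∏ i ∈ Finset.Icc 2 (n - 1), a i) ^ 2 := by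
    rw [← prod_Icc_mul_reflect, show 2 + (n - 1) = n + 1 by lia]
    rfl
  calc PD (n - 1) * P (n - 1) - PD (n - 2) * P n
      = casoratian P Q (n - 1) := by
        rw [casoratian, Nat.sub_add_cancel (by lia : 1 ≤ n), mul_comm, mul_comm (P n)]
        rfl
    _ = casoratian P Q 1 * ∏ i ∈ Finset.Ioc 1 (n - 1), c i :=
        casoratian_eq_mul_prod_Ioc (by lia) hPrec hQrec
    _ = a n * a 1 * (∏ i ∈ Finset.Icc 2 (n - 1), a i) ^ 2 := by rw [hinit, hprod]

theorem statement_3 (n0 : ℕ) (hn0 : 2 ≤ n0) (a b : ℕ → ℝ)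
    (ha : ∀ i, 1 ≤ i → i ≤ n0 → a i ≠ 0)
    (hb : ∀ j, j ≤ n0 → b j = b (n0 - j))
    (P : ℕ → Polynomial ℝ)
    (hP0 : P 0 = 1) (hP1 : P 1 = X - C (b 0))
    (hP : ∀ k, 2 ≤ k → k ≤ n0 + 1 →
      P k = (X - C (b (k - 1))) * P (k - 1) - C (a (k - 1) * a (n0 + 2 - k)) * P (k - 2))
    (PD : ℕ → Polynomial ℝ)
    (hPD0 : PD 0 = 1) (hPD1 : PD 1 = X - C (b 1))
    (hPD : ∀ k, 2 ≤ k → k ≤ n0 - 1 →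
      PD k = (X - C (b k)) * PD (k - 1) - C (a k * a (n0 + 1 - k)) * PD (k - 2)) :
    PD (n0 - 1) * P (n0 - 1) - PD (n0 - 2) * P n0
      = C (a n0 * a 1 * (∏ i ∈ Finset.Icc 2 (n0 - 1), a i) ^ 2) := by
  simp only [C_mul] at hP hPD
  simpa using statement_3_general hn0 (fun i => C (a i)) (fun i => X - C (b i)) P PD hP0 hP1
    (fun k hk hkn => hP k hk (by lia)) hPD0 hPD1 hPD
end

section
/- The polynomial identity (z − b(0))·P^D_{n0−1}(z) = P_{n0}(z) + a(1)·a(n0)·P^D_{n0−2}(z) holds. -/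
open Polynomial

/-!
Both families are continuants (characteristic polynomials of tridiagonal matrices), `P^D` being the
one whose diagonal starts one index later. Expanding `P_{n0}` along its first row gives
`(z - b(0)) P^D_{n0-1}` minus `a(1) a(n0)` times the continuant with diagonal indices
`2, …, n0 - 1`. A continuant is invariant under reversal of its entries. Since `b` is symmetric
under `j ↦ n0 - j` and the weights `a(j) a(n0+1-j)` under `j ↦ n0 + 1 - j`, reversal moves these
indices to `1, …, n0 - 2`, so the last continuant is `P^D_{n0-2}`.
-/

section Continuant

variable {R : Type*} [CommRing R]

/-- The continuant of order `n`: the determinant of the `n × n` tridiagonal matrix with diagonal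
`x 0, …, x (n - 1)` in which `c i` is the product of the two off-diagonal entries linking rows `i`
and `i + 1`. It is encoded by expansion along the last row, and later entries of the sequences
`x` and `c` are ignored. -/
def continuant (x c : ℕ → R) : ℕ → R
  | 0 => 1
  | 1 => x 0
  | n + 2 => x (n + 1) * continuant x c (n + 1) - c n * continuant x c n

theorem continuant_add_two (x c : ℕ → R) (n : ℕ) :
    continuant x c (n + 2) = x (n + 1) * continuant x c (n + 1) - c n * continuant x c n :=
  rfl

theorem continuant_add_two_left (x c : ℕ → R) (n : ℕ) :
    continuant x c (n + 2) =
      x 0 * continuant (fun i => x (i + 1)) (fun i => c (i + 1)) (n + 1) -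
        c 0 * continuant (fun i => x (i + 2)) (fun i => c (i + 2)) n := by
  induction n using Nat.twoStepInduction with
  | zero => simp only [continuant]; ring
  | one => simp only [continuant]; ring
  | more n ih₀ ih₁ =>
    rw [continuant_add_two, ih₀, ih₁, continuant_add_two _ _ (n + 1),
      continuant_add_two (fun i => x (i + 2))]
    ring

theorem continuant_eq_of_reverse {x y c d : ℕ → R} {n : ℕ}
    (hxy : ∀ i j, i + j + 1 = n → x i = y j) (hcd : ∀ i j, i + j + 2 = n → c i = d j) :
    continuant x c n = continuant y d n := by
  induction n using Nat.twoStepInduction generalizing y d with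
  | zero => rfl
  | one => exact hxy 0 0 rfl
  | more n ih₀ ih₁ =>
    have drop_one : continuant x c (n + 1) =
        continuant (fun i => y (i + 1)) (fun i => d (i + 1)) (n + 1) :=
      ih₁ (fun i j h => hxy i (j + 1) (by omega)) (fun i j h => hcd i (j + 1) (by omega))
    have drop_two : continuant x c n = continuant (fun i => y (i + 2)) (fun i => d (i + 2)) n :=
      ih₀ (fun i j h => hxy i (j + 2) (by omega)) (fun i j h => hcd i (j + 2) (by omega))
    rw [continuant_add_two, continuant_add_two_left y d, drop_one, drop_two,
      hxy (n + 1) 0 rfl, hcd n 0 rfl]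

theorem eq_continuant_of_recurrence {x c f : ℕ → R} {n : ℕ} (h_zero : f 0 = 1) (h_one : f 1 = x 0)
    (h_rec : ∀ k, k + 2 ≤ n → f (k + 2) = x (k + 1) * f (k + 1) - c k * f k)
    {k : ℕ} (hk : k ≤ n) : f k = continuant x c k := by
  induction k using Nat.twoStepInduction with
  | zero => exact h_zero
  | one => exact h_one
  | more k ih₀ ih₁ => rw [h_rec k hk, continuant_add_two, ih₀ (by omega), ih₁ (by omega)]

theorem statement_4_general {n0 : ℕ} (hn0 : 2 ≤ n0) {x c : ℕ → R}
    (hx : ∀ j, 1 ≤ j → j < n0 → x j = x (n0 - j))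
    (hc : ∀ j, 2 ≤ j → j < n0 → c j = c (n0 + 1 - j))
    {P : ℕ → R} (hP0 : P 0 = 1) (hP1 : P 1 = x 0)
    (hP : ∀ k, 2 ≤ k → k ≤ n0 → P k = x (k - 1) * P (k - 1) - c (k - 1) * P (k - 2))
    {PD : ℕ → R} (hPD0 : PD 0 = 1) (hPD1 : PD 1 = x 1)
    (hPD : ∀ k, 2 ≤ k → k ≤ n0 - 1 → PD k = x k * PD (k - 1) - c k * PD (k - 2)) :
    x 0 * PD (n0 - 1) = P n0 + c 1 * PD (n0 - 2) := by
  obtain ⟨n, rfl⟩ := Nat.exists_eq_add_of_le' hn0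
  have P_eq : P (n + 2) = continuant x (fun i => c (i + 1)) (n + 2) :=
    eq_continuant_of_recurrence hP0 hP1 (fun k hk => hP (k + 2) (by omega) hk) le_rfl
  have PD_eq {k : ℕ} (hk : k ≤ n + 1) :
      PD k = continuant (fun i => x (i + 1)) (fun i => c (i + 2)) k :=
    eq_continuant_of_recurrence hPD0 hPD1 (fun k hk => hPD (k + 2) (by omega) hk) hk
  have PD_eq_reverse : PD n = continuant (fun i => x (i + 2)) (fun i => c (i + 3)) n := by
    rw [PD_eq n.le_succ]
    refine continuant_eq_of_reverse (fun i j h => ?_) (fun i j h => ?_)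
    · rw [hx (i + 1) (by omega) (by omega), show n + 2 - (i + 1) = j + 2 by omega]
    · rw [hc (i + 2) (by omega) (by omega), show n + 2 + 1 - (i + 2) = j + 3 by omega]
  change x 0 * PD (n + 1) = P (n + 2) + c 1 * PD n
  rw [P_eq, continuant_add_two_left, PD_eq le_rfl, PD_eq_reverse, sub_add_cancel]

end Continuant

theorem statement_4 (n0 : ℕ) (hn0 : 2 ≤ n0) (a b : ℕ → ℝ)
    (ha : ∀ i, 1 ≤ i → i ≤ n0 → a i ≠ 0)
    (hb : ∀ j, j ≤ n0 → b j = b (n0 - j))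
    (P : ℕ → Polynomial ℝ)
    (hP0 : P 0 = 1) (hP1 : P 1 = X - C (b 0))
    (hP : ∀ k, 2 ≤ k → k ≤ n0 + 1 →
      P k = (X - C (b (k - 1))) * P (k - 1) - C (a (k - 1) * a (n0 + 2 - k)) * P (k - 2))
    (PD : ℕ → Polynomial ℝ)
    (hPD0 : PD 0 = 1) (hPD1 : PD 1 = X - C (b 1))
    (hPD : ∀ k, 2 ≤ k → k ≤ n0 - 1 →
      PD k = (X - C (b k)) * PD (k - 1) - C (a k * a (n0 + 1 - k)) * PD (k - 2)) :
    (X - C (b 0)) * PD (n0 - 1) = P n0 + C (a 1 * a n0) * PD (n0 - 2) :=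
  statement_4_general (x := fun j => X - C (b j)) (c := fun j => C (a j * a (n0 + 1 - j))) hn0
    (fun j _ hj => by rw [hb j hj.le])
    (fun j _ hj => by rw [Nat.sub_sub_self (by omega), mul_comm])
    hP0 hP1
    (fun k h2 hk => by rw [hP k h2 (by omega), show n0 + 2 - k = n0 + 1 - (k - 1) by omega])
    hPD0 hPD1 hPD
end

section
/- For every z ∈ ℝ with det(z·I − J^D_cs) ≠ 0, the 2×2 matrix X̄0 · (z·I − J^D_cs)^{−1} · X0 equals (a(1)·a(n0)/P^D_{n0−1}(z)) times the 2×2 matrix whose diagonal entries are P^D_{n0−2}(z) and whose off-diagonal entries are ∏_{i=2}^{n0−1} a(i) (the empty product being 1 when n0 = 2). -/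
open Polynomial

/-- The `(n0+1) × (n0+1)` centrosymmetric tridiagonal Jacobi matrix. -/
noncomputable def Jcs (n0 : ℕ) (a b : ℕ → ℝ) :
    Matrix (Fin (n0 + 1)) (Fin (n0 + 1)) ℝ :=
  Matrix.of fun i j =>
    if (j : ℕ) = (i : ℕ) then b (i : ℕ)
    else if (j : ℕ) = (i : ℕ) + 1 then a ((i : ℕ) + 1)
    else if (i : ℕ) = (j : ℕ) + 1 then a (n0 - (j : ℕ))
    else 0

/-- The `(n0−1) × (n0−1)` Dirichlet restriction of `Jcs`, obtained by deleting the
first and last rows and columns. -/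
noncomputable def JDcs (n0 : ℕ) (a b : ℕ → ℝ) :
    Matrix (Fin (n0 - 1)) (Fin (n0 - 1)) ℝ :=
  Matrix.of fun i j =>
    Jcs n0 a b ⟨(i : ℕ) + 1, by have := i.isLt; omega⟩ ⟨(j : ℕ) + 1, by have := j.isLt; omega⟩

/-- The `(n0−1) × 2` interior-to-boundary block `X₀` of `J_cs`: its only nonzero
entries are `X₀(1, 0) = a n0` (first interior row, boundary vertex `0`) and
`X₀(n0−1, n0) = a n0` (last interior row, boundary vertex `n0`). -/
noncomputable def X0mat (n0 : ℕ) (a : ℕ → ℝ) : Matrix (Fin (n0 - 1)) (Fin 2) ℝ :=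
  Matrix.of fun i j =>
    if (i : ℕ) = 0 ∧ (j : ℕ) = 0 then a n0
    else if (i : ℕ) = n0 - 2 ∧ (j : ℕ) = 1 then a n0
    else 0

/-- The `2 × (n0−1)` boundary-to-interior block `X̄₀` of `J_cs`: its only nonzero
entries are `X̄₀(0, 1) = a 1` and `X̄₀(n0, n0−1) = a 1`. -/
noncomputable def Xbar0mat (n0 : ℕ) (a : ℕ → ℝ) : Matrix (Fin 2) (Fin (n0 - 1)) ℝ :=
  Matrix.of fun i j =>
    if (i : ℕ) = 0 ∧ (j : ℕ) = 0 then a 1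
    else if (i : ℕ) = 1 ∧ (j : ℕ) = n0 - 2 then a 1
    else 0

/-!
By Cramer's rule the resolvent is the adjugate of `z·I − J^D_cs` divided by its determinant, and the
two corner blocks only see the four corner cofactors. Expanding along the last row shows that the
determinant satisfies the three-term recurrence of `P^D`, so it equals `P^D_{n0−1}(z)`. Deleting the
last row and column leaves the leading minor `P^D_{n0−2}(z)`; deleting the last row and the first
column leaves a triangular matrix, whose determinant is the product of the superdiagonal.
Centrosymmetry carries these two cofactors to the opposite corners.
-/

section Cofactors

variable {R : Type*} [CommRing R]

lemma det_eq_mul_det_submatrix_castSucc {n : ℕ} (A : Matrix (Fin (n + 1)) (Fin (n + 1)) R)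
    (h : ∀ i : Fin n, A i.castSucc (Fin.last n) = 0) :
    A.det = A (Fin.last n) (Fin.last n) * (A.submatrix Fin.castSucc Fin.castSucc).det := by
  rw [Matrix.det_succ_column A (Fin.last n), Fin.sum_univ_castSucc]
  simp [h, Fin.succAbove_last, ← two_mul]

lemma adjugate_apply_apply_of_submatrix_eq {n : Type*} [Fintype n] [DecidableEq n]
    {A : Matrix n n R} (e : n ≃ n) (hA : A.submatrix e e = A) (i j : n) :
    A.adjugate (e i) (e j) = A.adjugate i j := by
  rw [← Matrix.submatrix_apply A.adjugate, ← Matrix.adjugate_submatrix_equiv_self, hA]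

end Cofactors

section EndRows

variable {R : Type*} [CommSemiring R]

/-- The `2 × (m + 1)` matrix with `x` at the entries `(0, 0)` and `(1, m)`: the coupling of two
boundary vertices to the two ends of a path with `m + 1` vertices. For `m = 0` the two ends
coincide. -/
def endRows (m : ℕ) (x : R) : Matrix (Fin 2) (Fin (m + 1)) R :=
  x • (1 : Matrix (Fin (m + 1)) (Fin (m + 1)) R).submatrix ![0, Fin.last m] id

lemma endRows_apply {m : ℕ} (x : R) (r : Fin 2) (k : Fin (m + 1)) :
    endRows m x r k = if k = ![0, Fin.last m] r then x else 0 := by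
  rw [endRows, Matrix.smul_apply, Matrix.submatrix_apply, Matrix.one_apply, smul_eq_mul,
    mul_ite, mul_one, mul_zero]
  simp only [id, eq_comm]

lemma endRows_mul_mul_transpose_endRows {m : ℕ} (N : Matrix (Fin (m + 1)) (Fin (m + 1)) R)
    (x y : R) :
    endRows m x * N * (endRows m y).transpose =
      (x * y) • N.submatrix ![0, Fin.last m] ![0, Fin.last m] := by
  have rows : (1 : Matrix (Fin (m + 1)) (Fin (m + 1)) R).submatrix ![0, Fin.last m] id * N =
      N.submatrix ![0, Fin.last m] id :=
    Matrix.one_submatrix_mul _ (Equiv.refl _) N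
  have columns : N.submatrix ![0, Fin.last m] id *
      (1 : Matrix (Fin (m + 1)) (Fin (m + 1)) R).submatrix id ![0, Fin.last m] =
        N.submatrix ![0, Fin.last m] ![0, Fin.last m] :=
    Matrix.mul_submatrix_one (Equiv.refl _) _ _
  rw [endRows, endRows, Matrix.transpose_smul, Matrix.transpose_submatrix, Matrix.transpose_one,
    Matrix.smul_mul, Matrix.smul_mul, Matrix.mul_smul, smul_smul, rows, columns]

end EndRows

section Tridiagonal

section Entries

variable {R : Type*} [Zero R]

/-- The `n × n` tridiagonal matrix with diagonal `d 0, …, d (n - 1)`, superdiagonal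
`u 0, …, u (n - 2)` and subdiagonal `l 0, …, l (n - 2)`. The entries are taken from infinite
sequences, so that the matrices of different sizes are the leading submatrices of one another. -/
def tridiagonal (d u l : ℕ → R) (n : ℕ) : Matrix (Fin n) (Fin n) R :=
  Matrix.of fun i j =>
    if (j : ℕ) = i then d i
    else if (j : ℕ) = i + 1 then u i
    else if (i : ℕ) = j + 1 then l j
    else 0

lemma tridiagonal_apply_self (d u l : ℕ → R) {n : ℕ} (i : Fin n) :
    tridiagonal d u l n i i = d i := by
  simp [tridiagonal]

lemma tridiagonal_apply_castSucc_succ (d u l : ℕ → R) {n : ℕ} (i : Fin n) :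
    tridiagonal d u l (n + 1) i.castSucc i.succ = u i := by
  simp [tridiagonal]

lemma tridiagonal_apply_succ_castSucc (d u l : ℕ → R) {n : ℕ} (i : Fin n) :
    tridiagonal d u l (n + 1) i.succ i.castSucc = l i := by
  simp [tridiagonal, Nat.add_assoc]

lemma tridiagonal_apply_eq_zero (d u l : ℕ → R) {n : ℕ} {i j : Fin n}
    (h : (i : ℕ) + 1 < j ∨ (j : ℕ) + 1 < i) : tridiagonal d u l n i j = 0 := by
  rw [tridiagonal, Matrix.of_apply, if_neg (by omega), if_neg (by omega), if_neg (by omega)]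

lemma tridiagonal_submatrix_castSucc (d u l : ℕ → R) (n : ℕ) :
    (tridiagonal d u l (n + 1)).submatrix Fin.castSucc Fin.castSucc = tridiagonal d u l n :=
  rfl

lemma tridiagonal_submatrix_rev {d u l : ℕ → R} {n : ℕ} (hd : ∀ k ≤ n, d (n - k) = d k)
    (hlu : ∀ i j, i + j + 1 = n → l i = u j) :
    (tridiagonal d u l (n + 1)).submatrix Fin.rev Fin.rev = tridiagonal d u l (n + 1) := by
  ext i j
  have hi : (i.rev : ℕ) = n - i := by rw [Fin.val_rev]; omega
  have hj : (j.rev : ℕ) = n - j := by rw [Fin.val_rev]; omega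
  simp only [tridiagonal, Matrix.submatrix_apply, Matrix.of_apply, hi, hj]
  split_ifs
  all_goals first
    | omega
    | rfl
    | exact hd _ (by omega)
    | exact hlu _ _ (by omega)
    | exact (hlu _ _ (by omega)).symm

end Entries

variable {R : Type*} [CommRing R]

lemma smul_one_sub_tridiagonal (d u l : ℕ → R) (n : ℕ) (z : R) :
    z • (1 : Matrix (Fin n) (Fin n) R) - tridiagonal d u l n =
      tridiagonal (fun k => z - d k) (fun k => -u k) (fun k => -l k) n := by
  ext i j
  have hij : i = j ↔ (j : ℕ) = i := by rw [Fin.ext_iff, eq_comm]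
  simp only [tridiagonal, Matrix.sub_apply, Matrix.smul_apply, Matrix.one_apply, Matrix.of_apply,
    hij, smul_eq_mul]
  split_ifs <;> ring

lemma det_tridiagonal_submatrix_castSucc_succAbove (d u l : ℕ → R) (n : ℕ) :
    ((tridiagonal d u l (n + 2)).submatrix Fin.castSucc (Fin.last n).castSucc.succAbove).det =
      u n * (tridiagonal d u l n).det := by
  have succAbove_castSucc (j : Fin n) :
      (Fin.last n).castSucc.succAbove j.castSucc = j.castSucc.castSucc :=
    Fin.succAbove_of_castSucc_lt _ _ (by simp [Fin.lt_def])
  have succAbove_last : (Fin.last n).castSucc.succAbove (Fin.last n) = Fin.last (n + 1) :=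
    Fin.succAbove_castSucc_self (Fin.last n)
  rw [det_eq_mul_det_submatrix_castSucc, Matrix.submatrix_apply, succAbove_last]
  · congr 1
    · exact tridiagonal_apply_castSucc_succ d u l (Fin.last n)
    · congr 1
      ext i j
      rw [Matrix.submatrix_apply, Matrix.submatrix_apply, succAbove_castSucc]
      rfl
  · intro i
    rw [Matrix.submatrix_apply, succAbove_last]
    exact tridiagonal_apply_eq_zero d u l (Or.inl (by simp))

lemma det_tridiagonal_add_two (d u l : ℕ → R) (n : ℕ) :
    (tridiagonal d u l (n + 2)).det =
      d (n + 1) * (tridiagonal d u l (n + 1)).det - u n * l n * (tridiagonal d u l n).det := by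
  have last_row (j : Fin n) :
      tridiagonal d u l (n + 2) (Fin.last (n + 1)) j.castSucc.castSucc = 0 :=
    tridiagonal_apply_eq_zero d u l (Or.inr (by simp))
  have last_row_castSucc :
      tridiagonal d u l (n + 2) (Fin.last (n + 1)) (Fin.last n).castSucc = l n :=
    tridiagonal_apply_succ_castSucc d u l (Fin.last n)
  rw [Matrix.det_succ_row _ (Fin.last (n + 1)), Fin.sum_univ_castSucc, Fin.sum_univ_castSucc]
  simp only [last_row, last_row_castSucc, tridiagonal_apply_self, Fin.succAbove_last,
    det_tridiagonal_submatrix_castSucc_succAbove, tridiagonal_submatrix_castSucc, Fin.val_last,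
    Fin.val_castSucc, mul_zero, zero_mul, Finset.sum_const_zero, zero_add]
  rw [Odd.neg_one_pow ⟨n, by ring⟩, Even.neg_one_pow ⟨n + 1, rfl⟩]
  ring

lemma det_tridiagonal_eq_of_recurrence {d u l p : ℕ → R} {n : ℕ} (h0 : p 0 = 1) (h1 : p 1 = d 0)
    (hp : ∀ k, k + 2 ≤ n → p (k + 2) = d (k + 1) * p (k + 1) - u k * l k * p k) :
    ∀ k ≤ n, (tridiagonal d u l k).det = p k
  | 0, _ => by rw [Matrix.det_fin_zero, h0]
  | 1, _ => by simp [h1, tridiagonal]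
  | k + 2, hk => by
    rw [det_tridiagonal_add_two, hp k hk, det_tridiagonal_eq_of_recurrence h0 h1 hp k (by omega),
      det_tridiagonal_eq_of_recurrence h0 h1 hp (k + 1) (by omega)]

lemma adjugate_tridiagonal_last_last (d u l : ℕ → R) (n : ℕ) :
    (tridiagonal d u l (n + 1)).adjugate (Fin.last n) (Fin.last n) =
      (tridiagonal d u l n).det := by
  simp [Matrix.adjugate_fin_succ_eq_det_submatrix, Fin.succAbove_last,
    tridiagonal_submatrix_castSucc, ← two_mul]

lemma adjugate_tridiagonal_zero_last (d u l : ℕ → R) (n : ℕ) :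
    (tridiagonal d u l (n + 1)).adjugate 0 (Fin.last n) = ∏ k ∈ Finset.range n, -u k := by
  have minor_det : ((tridiagonal d u l (n + 1)).submatrix Fin.castSucc Fin.succ).det =
      ∏ k ∈ Finset.range n, u k := by
    rw [Matrix.det_of_isLowerTriangular, ← Fin.prod_univ_eq_prod_range]
    · exact Finset.prod_congr rfl fun i _ => tridiagonal_apply_castSucc_succ d u l i
    · intro i j hij
      have hij : (i : ℕ) < j := hij
      exact tridiagonal_apply_eq_zero d u l (Or.inl (by simpa using hij))
  simp [Matrix.adjugate_fin_succ_eq_det_submatrix, Fin.succAbove_last, Fin.succAbove_zero,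
    minor_det, Finset.prod_neg]

lemma adjugate_tridiagonal_corners {d u l : ℕ → R} {n : ℕ} (hd : ∀ k ≤ n, d (n - k) = d k)
    (hlu : ∀ i j, i + j + 1 = n → l i = u j) :
    (tridiagonal d u l (n + 1)).adjugate.submatrix ![0, Fin.last n] ![0, Fin.last n] =
      !![(tridiagonal d u l n).det, ∏ k ∈ Finset.range n, -u k;
         ∏ k ∈ Finset.range n, -u k, (tridiagonal d u l n).det] := by
  have rev_eq := adjugate_apply_apply_of_submatrix_eq Fin.revPerm
    (tridiagonal_submatrix_rev hd hlu)
  have zero_zero := rev_eq (Fin.last n) (Fin.last n)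
  have last_zero := rev_eq 0 (Fin.last n)
  simp only [Fin.revPerm_apply, Fin.rev_last, Fin.rev_zero] at zero_zero last_zero
  ext r s
  fin_cases r <;> fin_cases s <;>
    simp [zero_zero, last_zero, adjugate_tridiagonal_last_last, adjugate_tridiagonal_zero_last]

end Tridiagonal

section CentrosymmetricJacobi

/-- The leading `k × k` block of the Dirichlet restriction of the centrosymmetric Jacobi matrix with
coefficients `a` and `b` on the vertices `0, …, m + 2`, over an arbitrary ring; the whole
restriction is the case `k = m + 1`. The index `i` stands for the interior vertex `i + 1`. -/
def dirichletJacobi {R : Type*} [Zero R] (m : ℕ) (a b : ℕ → R) (k : ℕ) :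
    Matrix (Fin k) (Fin k) R :=
  tridiagonal (fun i => b (i + 1)) (fun i => a (i + 2)) (fun i => a (m + 1 - i)) k

variable {R : Type*} [CommRing R]

lemma det_smul_one_sub_dirichletJacobi {m : ℕ} {a b : ℕ → R} {PD : ℕ → R[X]}
    (hPD0 : PD 0 = 1) (hPD1 : PD 1 = X - C (b 1))
    (hPD : ∀ k, 2 ≤ k → k ≤ m + 1 →
      PD k = (X - C (b k)) * PD (k - 1) - C (a k * a (m + 3 - k)) * PD (k - 2))
    (z : R) {k : ℕ} (hk : k ≤ m + 1) :
    (z • (1 : Matrix (Fin k) (Fin k) R) - dirichletJacobi m a b k).det = (PD k).eval z := by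
  rw [dirichletJacobi, smul_one_sub_tridiagonal]
  refine det_tridiagonal_eq_of_recurrence (p := fun k => (PD k).eval z) (by simp [hPD0])
    (by simp [hPD1]) (fun j hj => ?_) k hk
  rw [hPD (j + 2) (by omega) hj, show m + 3 - (j + 2) = m + 1 - j by omega]
  simp

lemma adjugate_smul_one_sub_dirichletJacobi_corners {m : ℕ} {b : ℕ → R}
    (hb : ∀ j, j ≤ m + 2 → b j = b (m + 2 - j)) (a : ℕ → R) (z : R) :
    (z • (1 : Matrix (Fin (m + 1)) (Fin (m + 1)) R) -
        dirichletJacobi m a b (m + 1)).adjugate.submatrix ![0, Fin.last m] ![0, Fin.last m] =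
      !![(z • (1 : Matrix (Fin m) (Fin m) R) - dirichletJacobi m a b m).det,
           ∏ i ∈ Finset.Icc 2 (m + 1), a i;
         ∏ i ∈ Finset.Icc 2 (m + 1), a i,
           (z • (1 : Matrix (Fin m) (Fin m) R) - dirichletJacobi m a b m).det] := by
  have diagonal_symm (k : ℕ) (hk : k ≤ m) : z - b (m - k + 1) = z - b (k + 1) := by
    rw [hb (k + 1) (by omega), show m + 2 - (k + 1) = m - k + 1 by omega]
  have offDiagonal_symm (i j : ℕ) (hij : i + j + 1 = m) : -a (m + 1 - i) = -a (j + 2) := by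
    rw [show m + 1 - i = j + 2 by omega]
  have prod_superdiagonal :
      ∏ k ∈ Finset.range m, -(-a (k + 2)) = ∏ i ∈ Finset.Icc 2 (m + 1), a i := by
    simp only [neg_neg, add_comm _ 2]
    exact (Finset.prod_Ico_eq_prod_range a 2 (m + 2)).symm
  rw [dirichletJacobi, dirichletJacobi, smul_one_sub_tridiagonal, smul_one_sub_tridiagonal,
    adjugate_tridiagonal_corners diagonal_symm offDiagonal_symm, ← prod_superdiagonal]

theorem statement_6_general {K : Type*} [Field K] (m : ℕ) (a b : ℕ → K)
    (hb : ∀ j, j ≤ m + 2 → b j = b (m + 2 - j)) (PD : ℕ → K[X])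
    (hPD0 : PD 0 = 1) (hPD1 : PD 1 = X - C (b 1))
    (hPD : ∀ k, 2 ≤ k → k ≤ m + 1 →
      PD k = (X - C (b k)) * PD (k - 1) - C (a k * a (m + 3 - k)) * PD (k - 2))
    (z : K)
    (hdet : (z • (1 : Matrix (Fin (m + 1)) (Fin (m + 1)) K) -
      dirichletJacobi m a b (m + 1)).det ≠ 0) :
    endRows m (a 1) *
          (z • (1 : Matrix (Fin (m + 1)) (Fin (m + 1)) K) - dirichletJacobi m a b (m + 1))⁻¹ *
        (endRows m (a (m + 2))).transpose =
      (a 1 * a (m + 2) / (PD (m + 1)).eval z) •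
        !![(PD m).eval z, ∏ i ∈ Finset.Icc 2 (m + 1), a i;
           ∏ i ∈ Finset.Icc 2 (m + 1), a i, (PD m).eval z] := by
  have det_eq {k : ℕ} (hk : k ≤ m + 1) :
      (z • (1 : Matrix (Fin k) (Fin k) K) - dirichletJacobi m a b k).det = (PD k).eval z :=
    det_smul_one_sub_dirichletJacobi hPD0 hPD1 hPD z hk
  have inv_eq : (z • (1 : Matrix (Fin (m + 1)) (Fin (m + 1)) K) - dirichletJacobi m a b (m + 1))⁻¹ =
      ((PD (m + 1)).eval z)⁻¹ •
        (z • (1 : Matrix (Fin (m + 1)) (Fin (m + 1)) K) -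
          dirichletJacobi m a b (m + 1)).adjugate := by
    refine Matrix.inv_eq_right_inv ?_
    rw [Matrix.mul_smul, Matrix.mul_adjugate, smul_smul, ← det_eq le_rfl, inv_mul_cancel₀ hdet,
      one_smul]
  rw [endRows_mul_mul_transpose_endRows, inv_eq, Matrix.submatrix_smul]
  simp only [Pi.smul_apply]
  rw [adjugate_smul_one_sub_dirichletJacobi_corners hb, det_eq m.le_succ, smul_smul, div_eq_mul_inv]

end CentrosymmetricJacobi

lemma JDcs_add_two (m : ℕ) (a b : ℕ → ℝ) : JDcs (m + 2) a b = dirichletJacobi m a b (m + 1) := by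
  ext i j
  have subdiagonal_index : m + 2 - ((j : ℕ) + 1) = m + 1 - j := by omega
  simp only [JDcs, Jcs, dirichletJacobi, tridiagonal, Matrix.of_apply, Nat.add_right_cancel_iff,
    subdiagonal_index]

lemma Xbar0mat_add_two (m : ℕ) (a : ℕ → ℝ) : Xbar0mat (m + 2) a = endRows m (a 1) := by
  ext r k
  refine Eq.trans ?_ (endRows_apply (a 1) r k).symm
  fin_cases r <;> simp [Xbar0mat, Fin.ext_iff, -Fin.val_eq_zero_iff]

lemma X0mat_add_two (m : ℕ) (a : ℕ → ℝ) :
    X0mat (m + 2) a = (endRows m (a (m + 2))).transpose := by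
  ext k r
  refine Eq.trans ?_ (endRows_apply (a (m + 2)) r k).symm
  fin_cases r <;> simp [X0mat, Fin.ext_iff, -Fin.val_eq_zero_iff]

/-- For `z` with `det(z·I − J^D_cs) ≠ 0`,
`X̄₀ · (z·I − J^D_cs)⁻¹ · X₀` equals `(a 1 · a n0 / P^D_{n0−1}(z))` times the `2 × 2`
matrix with diagonal entries `P^D_{n0−2}(z)` and off-diagonal entries `∏_{i=2}^{n0−1} a i`. -/
theorem statement_6 (n0 : ℕ) (hn0 : 2 ≤ n0) (a b : ℕ → ℝ)
    (ha : ∀ i, 1 ≤ i → i ≤ n0 → a i ≠ 0)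
    (hb : ∀ j, j ≤ n0 → b j = b (n0 - j))
    (P : ℕ → Polynomial ℝ)
    (hP0 : P 0 = 1) (hP1 : P 1 = X - C (b 0))
    (hP : ∀ k, 2 ≤ k → k ≤ n0 + 1 →
      P k = (X - C (b (k - 1))) * P (k - 1) - C (a (k - 1) * a (n0 + 2 - k)) * P (k - 2))
    (PD : ℕ → Polynomial ℝ)
    (hPD0 : PD 0 = 1) (hPD1 : PD 1 = X - C (b 1))
    (hPD : ∀ k, 2 ≤ k → k ≤ n0 - 1 →
      PD k = (X - C (b k)) * PD (k - 1) - C (a k * a (n0 + 1 - k)) * PD (k - 2)) :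
    ∀ z : ℝ,
      (z • (1 : Matrix (Fin (n0 - 1)) (Fin (n0 - 1)) ℝ) - JDcs n0 a b).det ≠ 0 →
      Xbar0mat n0 a * (z • (1 : Matrix (Fin (n0 - 1)) (Fin (n0 - 1)) ℝ) - JDcs n0 a b)⁻¹ *
          X0mat n0 a =
        (a 1 * a n0 / (PD (n0 - 1)).eval z) •
          !![(PD (n0 - 2)).eval z, ∏ i ∈ Finset.Icc 2 (n0 - 1), a i;
             ∏ i ∈ Finset.Icc 2 (n0 - 1), a i, (PD (n0 - 2)).eval z] := by
  obtain ⟨m, rfl⟩ := Nat.exists_eq_add_of_le' hn0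
  rw [JDcs_add_two, Xbar0mat_add_two, X0mat_add_two]
  exact statement_6_general m a b hb PD hPD0 hPD1 hPD
end

section
/- If z_c ∈ ℝ is a critical point of the spectral decimation function, i.e. R′(z_c) = 0, then R(z_c) ∉ (0,2), that is, R(z_c) ≤ 0 or R(z_c) ≥ 2. -/
open Polynomial

/-!
The function `R` is `1 - p n / ∏ i, a i`, where `p k` is the characteristic polynomial of the
leading `k × k` block of a Jacobi matrix of size `n + 1`, symmetric about its antidiagonal. By this
symmetry the leading and the trailing `n × n` blocks have the same characteristic polynomial `p n`,
so the Desnanot–Jacobi identity reads `(p n) ^ 2 - p (n + 1) * q = ∏ i, c i`, where `q` belongs to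
the central block of size `n - 1`. At a critical point `z` of `p n` the product `p (n + 1) * q` is
critical as well. The positivity of the Wronskians of `q, p n` and of `p n, p (n + 1)` gives the
derivatives of `q` and `p (n + 1)` at `z` opposite signs, which forces `p (n + 1) * q` to be
nonnegative at `z`. Hence `(∏ i, a i) ^ 2 = ∏ i, c i ≤ p n (z) ^ 2`.
-/

section CommRing

variable {R : Type*} [CommRing R]

/-- The characteristic polynomial of the `n × n` Jacobi (tridiagonal) matrix with diagonal entries
`b 0, …, b (n - 1)`, where `c i` is the product of the two off-diagonal entries in positions
`(i, i + 1)` and `(i + 1, i)`. Defined by its three-term recurrence, it depends on the off-diagonal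
entries only through these products. Dropping the first row and column shifts `b` and `c` by one.
The polynomials `P k` of spectral decimation arise from `c i = a (i + 1) * a (n0 - i)`. -/
noncomputable def jacobiCharpoly (b c : ℕ → R) : ℕ → R[X]
  | 0 => 1
  | 1 => X - C (b 0)
  | n + 2 => (X - C (b (n + 1))) * jacobiCharpoly b c (n + 1) - C (c n) * jacobiCharpoly b c n

@[simp]
theorem jacobiCharpoly_zero (b c : ℕ → R) : jacobiCharpoly b c 0 = 1 := rfl

@[simp]
theorem jacobiCharpoly_one (b c : ℕ → R) : jacobiCharpoly b c 1 = X - C (b 0) := rfl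

theorem jacobiCharpoly_add_two (b c : ℕ → R) (n : ℕ) :
    jacobiCharpoly b c (n + 2) =
      (X - C (b (n + 1))) * jacobiCharpoly b c (n + 1) - C (c n) * jacobiCharpoly b c n := rfl

theorem eq_jacobiCharpoly_of_recurrence {b c : ℕ → R} {P : ℕ → R[X]} {N : ℕ}
    (h0 : P 0 = 1) (h1 : P 1 = X - C (b 0))
    (h : ∀ k, k + 2 ≤ N → P (k + 2) = (X - C (b (k + 1))) * P (k + 1) - C (c k) * P k) :
    ∀ k ≤ N, P k = jacobiCharpoly b c k
  | 0, _ => h0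
  | 1, _ => h1
  | k + 2, hk => by
    rw [h k hk, jacobiCharpoly_add_two, eq_jacobiCharpoly_of_recurrence h0 h1 h (k + 1) (by lia),
      eq_jacobiCharpoly_of_recurrence h0 h1 h k (by lia)]

theorem jacobiCharpoly_add_two_expand_first (b c : ℕ → R) (n : ℕ) :
    jacobiCharpoly b c (n + 2) =
      (X - C (b 0)) * jacobiCharpoly (fun i ↦ b (i + 1)) (fun i ↦ c (i + 1)) (n + 1) -
        C (c 0) * jacobiCharpoly (fun i ↦ b (i + 2)) (fun i ↦ c (i + 2)) n := by
  induction n using Nat.twoStepInduction with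
  | zero =>
    simp only [jacobiCharpoly_add_two, jacobiCharpoly_zero, jacobiCharpoly_one, zero_add]
    ring
  | one =>
    simp only [jacobiCharpoly_add_two, jacobiCharpoly_zero, jacobiCharpoly_one, zero_add,
      Nat.reduceAdd]
    ring
  | more n ih₀ ih₁ =>
    rw [jacobiCharpoly_add_two b c (n + 2), ih₁, ih₀, jacobiCharpoly_add_two _ _ (n + 1),
      jacobiCharpoly_add_two (fun i ↦ b (i + 2)) _ n]
    ring

theorem jacobiCharpoly_congr_reverse {b b' c c' : ℕ → R} {n : ℕ}
    (hb : ∀ i j, i + j + 1 = n → b i = b' j) (hc : ∀ i j, i + j + 2 = n → c i = c' j) :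
    jacobiCharpoly b c n = jacobiCharpoly b' c' n := by
  induction n using Nat.twoStepInduction generalizing b c with
  | zero => rfl
  | one => rw [jacobiCharpoly_one, jacobiCharpoly_one, hb 0 0 rfl]
  | more n ih₀ ih₁ =>
    rw [jacobiCharpoly_add_two_expand_first, jacobiCharpoly_add_two, hb 0 (n + 1) (by lia),
      hc 0 n (by lia),
      ih₁ (fun i j _ ↦ hb (i + 1) j (by lia)) (fun i j _ ↦ hc (i + 1) j (by lia)),
      ih₀ (fun i j _ ↦ hb (i + 2) j (by lia)) (fun i j _ ↦ hc (i + 2) j (by lia))]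

theorem jacobiCharpoly_desnanot_jacobi (b c : ℕ → R) (n : ℕ) :
    jacobiCharpoly (fun i ↦ b (i + 1)) (fun i ↦ c (i + 1)) n * jacobiCharpoly b c (n + 2) =
      jacobiCharpoly (fun i ↦ b (i + 1)) (fun i ↦ c (i + 1)) (n + 1) * jacobiCharpoly b c (n + 1) -
        C (∏ i ∈ Finset.range (n + 1), c i) := by
  induction n with
  | zero =>
    simp only [jacobiCharpoly_add_two, jacobiCharpoly_zero, jacobiCharpoly_one, zero_add,
      Finset.prod_range_one]
    ring
  | succ n ih =>
    rw [Finset.prod_range_succ, C_mul, jacobiCharpoly_add_two b c (n + 1),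
      jacobiCharpoly_add_two (fun i ↦ b (i + 1)) _ n]
    linear_combination C (c (n + 1)) * ih

theorem wronskian_jacobiCharpoly_succ (b c : ℕ → R) (n : ℕ) :
    wronskian (jacobiCharpoly b c (n + 1)) (jacobiCharpoly b c (n + 2)) =
      jacobiCharpoly b c (n + 1) ^ 2 +
        C (c n) * wronskian (jacobiCharpoly b c n) (jacobiCharpoly b c (n + 1)) := by
  simp only [wronskian, jacobiCharpoly_add_two, derivative_sub, derivative_mul, derivative_X,
    derivative_C]
  ring

end CommRing

section OrderedRing

variable {R : Type*} [CommRing R] [LinearOrder R] [IsStrictOrderedRing R]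

theorem eval_mul_nonneg_of_wronskian_pos {f g h : R[X]} {z : R}
    (hf : (derivative f).eval z = 0) (hgh : (derivative (g * h)).eval z = 0)
    (hgf : 0 < (wronskian g f).eval z) (hfh : 0 < (wronskian f h).eval z) :
    0 ≤ (g * h).eval z := by
  simp only [wronskian, derivative_mul, eval_sub, eval_add, eval_mul, hf, mul_zero, zero_mul,
    zero_sub, sub_zero] at hgh hgf hfh ⊢
  set g' := (derivative g).eval z
  set h' := (derivative h).eval z
  have opposite_signs : 0 < -(g' * h') := by
    refine pos_of_mul_pos_left ?_ (sq_nonneg (f.eval z))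
    linear_combination mul_pos hgf hfh
  have h'_ne_zero : h' ≠ 0 := right_ne_zero_of_mul hfh.ne'
  refine nonneg_of_mul_nonneg_left (b := h' ^ 2) ?_ (by positivity)
  calc
    0 ≤ -(g' * h') * h.eval z ^ 2 := by positivity
    _ = g.eval z * h.eval z * h' ^ 2 := by linear_combination (-(h.eval z * h')) * hgh

theorem eval_wronskian_jacobiCharpoly_pos {b c : ℕ → R} {n : ℕ} (hc : ∀ i < n, 0 < c i) (z : R) :
    0 < (wronskian (jacobiCharpoly b c n) (jacobiCharpoly b c (n + 1))).eval z := by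
  induction n with
  | zero => simp [wronskian]
  | succ n ih =>
    rw [wronskian_jacobiCharpoly_succ, eval_add, eval_pow, eval_mul, eval_C]
    have := mul_pos (hc n n.lt_succ_self) (ih fun i hi ↦ hc i (hi.trans n.lt_succ_self))
    positivity

theorem prod_le_sq_eval_jacobiCharpoly {b c : ℕ → R} {n : ℕ}
    (hb : ∀ i j, i + j = n → b i = b j) (hc : ∀ i j, i + j + 1 = n → c i = c j)
    (hc_pos : ∀ i < n, 0 < c i) {z : R} (hz : (derivative (jacobiCharpoly b c n)).eval z = 0) :
    ∏ i ∈ Finset.range n, c i ≤ (jacobiCharpoly b c n).eval z ^ 2 := by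
  obtain _ | n := n
  · simp
  set p := jacobiCharpoly b c
  set q := jacobiCharpoly (fun i ↦ b (i + 1)) (fun i ↦ c (i + 1))
  have trailing_eq_leading : q (n + 1) = p (n + 1) :=
    jacobiCharpoly_congr_reverse (fun i j _ ↦ hb (i + 1) j (by lia))
      (fun i j _ ↦ hc (i + 1) j (by lia))
  have mul_eq_sq_sub : q n * p (n + 2) = p (n + 1) ^ 2 - C (∏ i ∈ Finset.range (n + 1), c i) :=
    calc
      q n * p (n + 2) = q (n + 1) * p (n + 1) - C (∏ i ∈ Finset.range (n + 1), c i) :=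
        jacobiCharpoly_desnanot_jacobi b c n
      _ = p (n + 1) ^ 2 - C (∏ i ∈ Finset.range (n + 1), c i) := by rw [trailing_eq_leading, sq]
  have product_critical : (derivative (q n * p (n + 2))).eval z = 0 := by
    simp only [mul_eq_sq_sub, derivative_sub, derivative_C, derivative_sq, sub_zero, eval_mul, hz,
      mul_zero]
  have wronskian_pos : 0 < (wronskian (q n) (p (n + 1))).eval z := by
    rw [← trailing_eq_leading]
    exact eval_wronskian_jacobiCharpoly_pos (fun i _ ↦ hc_pos (i + 1) (by lia)) z
  have product_nonneg : 0 ≤ (q n * p (n + 2)).eval z :=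
    eval_mul_nonneg_of_wronskian_pos hz product_critical wronskian_pos
      (eval_wronskian_jacobiCharpoly_pos hc_pos z)
  rw [mul_eq_sq_sub, eval_sub, eval_pow, eval_C] at product_nonneg
  exact sub_nonneg.mp product_nonneg

theorem one_sub_nonpos_or_two_le_of_one_le_sq {x : R} (hx : 1 ≤ x ^ 2) :
    1 - x ≤ 0 ∨ 2 ≤ 1 - x := by
  rcases le_abs.mp ((one_le_sq_iff_one_le_abs x).mp hx) with h | h
  · exact .inl (by linarith)
  · exact .inr (by linarith)

end OrderedRing

theorem prod_range_mul_reflect_eq_sq {M : Type*} [CommMonoid M] (a : ℕ → M) (n : ℕ) :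
    ∏ i ∈ Finset.range n, (a (i + 1) * a (n - i)) = (∏ i ∈ Finset.Icc 1 n, a i) ^ 2 := by
  have prod_shift : ∏ i ∈ Finset.range n, a (i + 1) = ∏ i ∈ Finset.Icc 1 n, a i := by
    rw [Finset.range_eq_Ico, Finset.prod_Ico_add', zero_add, Finset.Ico_add_one_right_eq_Icc]
  have prod_reflect : ∏ i ∈ Finset.range n, a (n - i) = ∏ i ∈ Finset.range n, a (i + 1) := by
    rw [← Finset.prod_range_reflect]
    exact Finset.prod_congr rfl fun i hi ↦ by grind
  rw [Finset.prod_mul_distrib, prod_reflect, prod_shift, sq]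

theorem statement_10_general {K : Type*} [Field K] [LinearOrder K] [IsStrictOrderedRing K]
    (n0 : ℕ) (a b : ℕ → K)
    (hb : ∀ j, j ≤ n0 → b j = b (n0 - j))
    (hpos : ∀ j, 1 ≤ j → j ≤ n0 → 0 < a j * a (n0 + 1 - j))
    (P : ℕ → K[X])
    (hP0 : P 0 = 1) (hP1 : P 1 = X - C (b 0))
    (hP : ∀ k, 2 ≤ k → k ≤ n0 →
      P k = (X - C (b (k - 1))) * P (k - 1) - C (a (k - 1) * a (n0 + 2 - k)) * P (k - 2))
    (zc : K)
    (hcrit : (derivative (1 - C (∏ i ∈ Finset.Icc 1 n0, a i)⁻¹ * P n0)).eval zc = 0) :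
    (1 - C (∏ i ∈ Finset.Icc 1 n0, a i)⁻¹ * P n0).eval zc ≤ 0 ∨
      2 ≤ (1 - C (∏ i ∈ Finset.Icc 1 n0, a i)⁻¹ * P n0).eval zc := by
  let c : ℕ → K := fun i ↦ a (i + 1) * a (n0 - i)
  have hc_pos : ∀ i < n0, 0 < c i := fun i hi ↦ by simpa using hpos (i + 1) (by lia) hi
  have hc : ∀ i j, i + j + 1 = n0 → c i = c j := by
    rintro i j rfl
    simp only [c, show i + j + 1 - i = j + 1 by lia, show i + j + 1 - j = i + 1 by lia,
      mul_comm]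
  have hPn : P n0 = jacobiCharpoly b c n0 :=
    eq_jacobiCharpoly_of_recurrence hP0 hP1
      (fun k hk ↦ by simpa [c] using hP (k + 2) (by lia) hk) n0 le_rfl
  have hprod : ∏ i ∈ Finset.range n0, c i = (∏ i ∈ Finset.Icc 1 n0, a i) ^ 2 :=
    prod_range_mul_reflect_eq_sq a n0
  set A := ∏ i ∈ Finset.Icc 1 n0, a i
  have hA : 0 < A ^ 2 := hprod ▸ Finset.prod_pos fun i hi ↦ hc_pos i (Finset.mem_range.mp hi)
  have hA0 : A ≠ 0 := pow_ne_zero_iff two_ne_zero |>.mp hA.ne'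
  have hle : A ^ 2 ≤ (P n0).eval zc ^ 2 := by
    rw [← hprod, hPn]
    refine prod_le_sq_eval_jacobiCharpoly
      (fun i j hij ↦ by rw [hb i (by lia), ← hij, Nat.add_sub_cancel_left]) hc hc_pos ?_
    simpa [hA0, hPn] using hcrit
  rw [eval_sub, eval_one, eval_mul, eval_C]
  apply one_sub_nonpos_or_two_le_of_one_le_sq
  rwa [mul_pow, inv_pow, inv_mul_eq_div, one_le_div hA]

/-- If `z_c ∈ ℝ` is a critical point of the spectral decimation
function `R = 1 − (∏ a(i))⁻¹ · P_{n0}` (i.e. `R′(z_c) = 0`), then `R(z_c) ∉ (0, 2)`. -/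
theorem statement_10 (n0 : ℕ) (hn0 : 2 ≤ n0) (a b : ℕ → ℝ)
    (ha : ∀ i, 1 ≤ i → i ≤ n0 → a i ≠ 0)
    (hb : ∀ j, j ≤ n0 → b j = b (n0 - j))
    (hpos : ∀ j, 1 ≤ j → j ≤ n0 → 0 < a j * a (n0 + 1 - j))
    (P : ℕ → Polynomial ℝ)
    (hP0 : P 0 = 1) (hP1 : P 1 = X - C (b 0))
    (hP : ∀ k, 2 ≤ k → k ≤ n0 + 1 →
      P k = (X - C (b (k - 1))) * P (k - 1) - C (a (k - 1) * a (n0 + 2 - k)) * P (k - 2))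
    (zc : ℝ)
    (hcrit : (Polynomial.derivative
      (1 - C (∏ i ∈ Finset.Icc 1 n0, a i)⁻¹ * P n0)).eval zc = 0) :
    (1 - C (∏ i ∈ Finset.Icc 1 n0, a i)⁻¹ * P n0).eval zc ≤ 0 ∨
    2 ≤ (1 - C (∏ i ∈ Finset.Icc 1 n0, a i)⁻¹ * P n0).eval zc := by
  exact statement_10_general n0 a b hb hpos P hP0 hP1 (fun k h2 hk ↦ hP k h2 (by lia)) zc hcrit
end

section
/- The monic degree-n0 polynomial P_{n0} has exactly n0 distinct real roots; its derivative P′_{n0} has exactly n0−1 distinct real roots, with exactly one critical point strictly between each pair of consecutive roots of P_{n0}; and every real critical point z_c of P_{n0} (i.e. P′_{n0}(z_c) = 0) satisfies P_{n0}(z_c)·P″_{n0}(z_c) < 0. -/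
open Polynomial

/-!
Along a three-term recurrence with positive coefficients `γ`, the Wronskian
`P_n P_{n+1}' - P_n' P_{n+1}` and the form `im z * im (P_{n+1}(z) * conj P_n(z))` each equal a
nonnegative term plus `γ` times the same expression one index lower, so both stay positive. The
second excludes nonreal roots of `P_{n+1}` and the first excludes multiple ones.

For a nonconstant real-rooted `f`, the Wronskian of `f` and `f'` is `f f'' - f'^2 = f^2 (f' / f)'`.
It is negative off the roots, since `f' / f` is the sum of the decreasing functions `1 / (x - r)`
over the roots `r`. If the roots are simple, none of them is critical, so `f f'' < 0` at every
critical point. Moreover `f' / f` vanishes at most once between consecutive roots.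
-/

lemma isCoprime_of_splits {K : Type*} [Field K] {f g : K[X]} (hf : f.Splits) (hf0 : f ≠ 0)
    (h : ∀ x, f.eval x = 0 → g.eval x ≠ 0) : IsCoprime f g := by
  refine isCoprime_of_irreducible_dvd (fun h0 ↦ hf0 h0.1) fun p hp hpf hpg ↦ ?_
  obtain ⟨x, hx⟩ := (hf.of_dvd hf0 hpf).exists_eval_eq_zero hp.degree_pos.ne'
  exact h x (eval_eq_zero_of_dvd_of_eval_eq_zero hpf hx)
    (eval_eq_zero_of_dvd_of_eval_eq_zero hpg hx)

lemma ncard_setOf_eval_eq_zero {R : Type*} [CommRing R] [IsDomain R] {f : R[X]} (hf : f.Splits)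
    (hsep : f.Separable) : {x | f.eval x = 0}.ncard = f.natDegree := by
  classical
  have hroots : {x | f.eval x = 0} = (f.roots.toFinset : Set R) := by
    ext x
    simp [hsep.ne_zero]
  rw [hroots, Set.ncard_coe_finset, Multiset.toFinset_card_of_nodup (nodup_roots hsep),
    hf.natDegree_eq_card_roots]

section Laguerre

lemma wronskian_derivative_mul {R : Type*} [CommRing R] (f g : R[X]) :
    wronskian (f * g) (derivative (f * g)) =
      f ^ 2 * wronskian g (derivative g) + g ^ 2 * wronskian f (derivative f) := by
  simp only [wronskian, derivative_mul, derivative_add]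
  ring

lemma eval_wronskian_derivative_nonpos {R : Type*} [CommRing R] [LinearOrder R]
    [IsStrictOrderedRing R] {f : R[X]} (hf : f.Splits) (x : R) :
    (wronskian f (derivative f)).eval x ≤ 0 := by
  induction hf using Submonoid.closure_induction with
  | mem p hp => obtain ⟨a, rfl⟩ | ⟨a, rfl⟩ := hp <;> simp [wronskian]
  | one => simp [wronskian]
  | mul p q _ _ hp hq =>
    simp only [wronskian_derivative_mul, eval_add, eval_mul, eval_pow]
    exact add_nonpos (mul_nonpos_of_nonneg_of_nonpos (sq_nonneg _) hq)
      (mul_nonpos_of_nonneg_of_nonpos (sq_nonneg _) hp)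

variable {K : Type*} [Field K] [LinearOrder K] [IsStrictOrderedRing K] {f : K[X]}

lemma eval_wronskian_derivative_neg_of_eval_ne_zero (hf : f.Splits) (hdeg : f.natDegree ≠ 0) {x : K}
    (hx : f.eval x ≠ 0) : (wronskian f (derivative f)).eval x < 0 := by
  obtain ⟨r, hr⟩ := hf.exists_eval_eq_zero (degree_ne_of_natDegree_ne hdeg)
  obtain ⟨g, rfl⟩ := dvd_iff_isRoot.mpr hr
  have hgx : g.eval x ≠ 0 := fun h ↦ hx (by simp [h])
  have hg : g.Splits := hf.of_dvd (fun h ↦ hx (by simp [h])) (dvd_mul_left _ _)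
  have hlin : (wronskian (X - C r) (derivative (X - C r))).eval x = -1 := by simp [wronskian]
  simp only [wronskian_derivative_mul, eval_add, eval_mul, eval_pow, hlin, mul_neg_one]
  exact add_neg_of_nonpos_of_neg
    (mul_nonpos_of_nonneg_of_nonpos (sq_nonneg _) (eval_wronskian_derivative_nonpos hg x))
    (neg_neg_of_pos (by positivity))

lemma eval_mul_eval_derivative_derivative_neg (hf : f.Splits) (hsep : f.Separable)
    (hdeg : f.natDegree ≠ 0) {x : K} (hx : (derivative f).eval x = 0) :
    f.eval x * (derivative (derivative f)).eval x < 0 := by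
  have hfx : f.eval x ≠ 0 := fun h ↦ hsep.eval₂_derivative_ne_zero (RingHom.id K) h hx
  simpa [wronskian, hx] using eval_wronskian_derivative_neg_of_eval_ne_zero hf hdeg hfx

end Laguerre

section Derivative

variable {f : ℝ[X]}

lemma splits_derivative (hf : f.Splits) : (derivative f).Splits := by
  refine splits_iff_card_roots.mpr (le_antisymm (card_roots' _) ?_)
  have hcard := card_roots_le_derivative f
  rw [splits_iff_card_roots.mp hf] at hcard
  have := natDegree_derivative_le f
  omega

lemma separable_derivative (hf : f.Splits) (hsep : f.Separable) (hdeg : f.natDegree ≠ 0) :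
    (derivative f).Separable := by
  refine isCoprime_of_splits (splits_derivative hf) ?_ fun x hx h ↦ ?_
  · exact derivative_eq_zero.not.mpr hdeg
  · simpa [h] using eval_mul_eval_derivative_derivative_neg hf hsep hdeg hx

lemma strictAntiOn_eval_derivative_div_eval (hf : f.Splits) (hdeg : f.natDegree ≠ 0) {s : Set ℝ}
    (hs : Convex ℝ s) (hne : ∀ x ∈ s, f.eval x ≠ 0) :
    StrictAntiOn (fun x ↦ (derivative f).eval x / f.eval x) s := by
  refine strictAntiOn_of_deriv_neg hs
    ((derivative f).continuousOn.div f.continuousOn hne) fun x hx ↦ ?_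
  have hfx := hne x (interior_subset hx)
  have hderiv := (((derivative f).hasDerivAt x).fun_div (f.hasDerivAt x) hfx).deriv
  have hneg := eval_wronskian_derivative_neg_of_eval_ne_zero hf hdeg hfx
  simp only [wronskian, eval_sub, eval_mul] at hneg
  rw [hderiv]
  exact div_neg_of_neg_of_pos (by linarith) (by positivity)

lemma existsUnique_eval_derivative_eq_zero (hf : f.Splits) {r₁ r₂ : ℝ} (h₁ : f.eval r₁ = 0)
    (h₂ : f.eval r₂ = 0) (hlt : r₁ < r₂) (hne : ∀ x, r₁ < x → x < r₂ → f.eval x ≠ 0) :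
    ∃! c, r₁ < c ∧ c < r₂ ∧ (derivative f).eval c = 0 := by
  have hdeg : f.natDegree ≠ 0 := by
    intro hdeg
    obtain ⟨m, hm₁, hm₂⟩ := exists_between hlt
    rw [eq_C_of_natDegree_eq_zero hdeg, eval_C] at h₁
    exact hne m hm₁ hm₂ (by rw [eq_C_of_natDegree_eq_zero hdeg, eval_C, h₁])
  obtain ⟨c, hc, hc0⟩ := exists_hasDerivAt_eq_zero hlt f.continuousOn (h₁.trans h₂.symm)
    fun x _ ↦ f.hasDerivAt x
  have hinj := (strictAntiOn_eval_derivative_div_eval hf hdeg (convex_Ioo r₁ r₂)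
    fun x hx ↦ hne x hx.1 hx.2).injOn
  exact ⟨c, ⟨hc.1, hc.2, hc0⟩, fun y ⟨hy₁, hy₂, hy0⟩ ↦
    hinj ⟨hy₁, hy₂⟩ hc (by simp only [hy0, hc0, zero_div])⟩

end Derivative

lemma splits_of_forall_aeval_im_eq_zero {f : ℝ[X]}
    (h : ∀ z : ℂ, aeval z f = 0 → z.im = 0) : f.Splits := by
  refine Splits.of_splits_map (algebraMap ℝ ℂ) (IsAlgClosed.splits _) fun z hz ↦ ?_
  have hroot : aeval z f = 0 := by
    simpa [IsRoot, eval_map_algebraMap] using (mem_roots'.1 hz).2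
  exact ⟨z.re, Complex.ext (by simp) (by simp [h z hroot])⟩

/-- The monic polynomials given by `P₋₁ = 0`, `P₀ = 1` and
`P (k + 1) = (X - β k) * P k - γ (k - 1) * P (k - 1)`. When all `γ k` are positive these are, by
Favard's theorem, the monic orthogonal polynomials of some measure. The index of `γ` is that of the
polynomial it multiplies, so that only `γ 0, …, γ (n - 1)` enter the polynomial of index `n + 1`. -/
noncomputable def threeTermPoly {R : Type*} [CommRing R] (β γ : ℕ → R) : ℕ → R[X]
  | 0 => 1
  | 1 => X - C (β 0)
  | k + 2 => (X - C (β (k + 1))) * threeTermPoly β γ (k + 1) - C (γ k) * threeTermPoly β γ k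

section ThreeTermPoly

lemma eq_threeTermPoly {R : Type*} [CommRing R] {β γ : ℕ → R} {P : ℕ → R[X]} {n : ℕ}
    (h0 : P 0 = 1) (h1 : P 1 = X - C (β 0))
    (hrec : ∀ k, k + 2 ≤ n → P (k + 2) = (X - C (β (k + 1))) * P (k + 1) - C (γ k) * P k) :
    P n = threeTermPoly β γ n := by
  suffices ∀ k ≤ n, P k = threeTermPoly β γ k from this n le_rfl
  intro k
  induction k using Nat.twoStepInduction with
  | zero => exact fun _ ↦ h0
  | one => exact fun _ ↦ h1
  | more k ih₀ ih₁ =>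
    intro hk
    rw [hrec k hk, ih₀ (by omega), ih₁ (by omega), threeTermPoly]

lemma isMonicOfDegree_threeTermPoly {R : Type*} [CommRing R] [Nontrivial R] (β γ : ℕ → R) (n : ℕ) :
    IsMonicOfDegree (threeTermPoly β γ n) n := by
  induction n using Nat.twoStepInduction with
  | zero => exact isMonicOfDegree_zero_iff.mpr rfl
  | one => exact isMonicOfDegree_X_sub_one _
  | more k ih₀ ih₁ =>
    have hlead : IsMonicOfDegree ((X - C (β (k + 1))) * threeTermPoly β γ (k + 1)) (k + 2) := by
      simpa only [add_comm 1] using (isMonicOfDegree_X_sub_one (β (k + 1))).mul ih₁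
    refine hlead.sub ((natDegree_C_mul_le _ _).trans_lt ?_)
    rw [ih₀.natDegree_eq]
    omega

lemma eval_wronskian_threeTermPoly_pos {R : Type*} [CommRing R] [LinearOrder R]
    [IsStrictOrderedRing R] {β γ : ℕ → R} {n : ℕ} (hγ : ∀ k < n, 0 < γ k) (x : R) :
    0 < (wronskian (threeTermPoly β γ n) (threeTermPoly β γ (n + 1))).eval x := by
  induction n with
  | zero => simp [threeTermPoly, wronskian]
  | succ n ih =>
    have hstep : (wronskian (threeTermPoly β γ (n + 1)) (threeTermPoly β γ (n + 2))).eval x =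
        (threeTermPoly β γ (n + 1)).eval x ^ 2 +
          γ n * (wronskian (threeTermPoly β γ n) (threeTermPoly β γ (n + 1))).eval x := by
      simp only [threeTermPoly, wronskian, derivative_sub, derivative_mul, derivative_X,
        derivative_C, eval_sub, eval_add, eval_mul, eval_X, eval_C, eval_zero, eval_one]
      ring
    rw [hstep]
    exact add_pos_of_nonneg_of_pos (sq_nonneg _)
      (mul_pos (hγ n n.lt_succ_self) (ih fun k hk ↦ hγ k (hk.trans n.lt_succ_self)))

variable {β γ : ℕ → ℝ} {n : ℕ}

lemma im_mul_im_aeval_threeTermPoly_pos (hγ : ∀ k < n, 0 < γ k) {z : ℂ} (hz : z.im ≠ 0) :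
    0 < z.im * (aeval z (threeTermPoly β γ (n + 1)) *
      (starRingEnd ℂ) (aeval z (threeTermPoly β γ n))).im := by
  induction n with
  | zero => simpa [threeTermPoly] using hz
  | succ n ih =>
    have hstep : z.im * (aeval z (threeTermPoly β γ (n + 2)) *
          (starRingEnd ℂ) (aeval z (threeTermPoly β γ (n + 1)))).im =
        z.im ^ 2 * Complex.normSq (aeval z (threeTermPoly β γ (n + 1))) +
          γ n * (z.im * (aeval z (threeTermPoly β γ (n + 1)) *
            (starRingEnd ℂ) (aeval z (threeTermPoly β γ n))).im) := by
      simp only [threeTermPoly, aeval_sub, map_mul, aeval_X, aeval_C, Complex.coe_algebraMap,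
        Complex.mul_im, Complex.sub_re, Complex.mul_re, Complex.ofReal_re, Complex.sub_im,
        Complex.ofReal_im, Complex.conj_im, Complex.conj_re, Complex.normSq_apply]
      ring
    rw [hstep]
    exact add_pos_of_nonneg_of_pos (mul_nonneg (sq_nonneg _) (Complex.normSq_nonneg _))
      (mul_pos (hγ n n.lt_succ_self) (ih fun k hk ↦ hγ k (hk.trans n.lt_succ_self)))

lemma splits_threeTermPoly_succ (hγ : ∀ k < n, 0 < γ k) : (threeTermPoly β γ (n + 1)).Splits := by
  refine splits_of_forall_aeval_im_eq_zero fun z hroot ↦ ?_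
  by_contra hz
  simpa [hroot] using im_mul_im_aeval_threeTermPoly_pos (β := β) hγ hz

lemma separable_threeTermPoly_succ (hγ : ∀ k < n, 0 < γ k) :
    (threeTermPoly β γ (n + 1)).Separable := by
  refine isCoprime_of_splits (splits_threeTermPoly_succ hγ)
    (isMonicOfDegree_threeTermPoly β γ (n + 1)).ne_zero fun x hx hx' ↦ ?_
  simpa [wronskian, hx, hx'] using eval_wronskian_threeTermPoly_pos (β := β) hγ x

end ThreeTermPoly

theorem statement_12_general (β γ : ℕ → ℝ) (n : ℕ) (hγ : ∀ k < n, 0 < γ k) :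
    {x : ℝ | (threeTermPoly β γ (n + 1)).eval x = 0}.ncard = n + 1 ∧
    {x : ℝ | (derivative (threeTermPoly β γ (n + 1))).eval x = 0}.ncard = n ∧
    (∀ r₁ r₂ : ℝ, (threeTermPoly β γ (n + 1)).eval r₁ = 0 →
      (threeTermPoly β γ (n + 1)).eval r₂ = 0 → r₁ < r₂ →
      (∀ x : ℝ, r₁ < x → x < r₂ → (threeTermPoly β γ (n + 1)).eval x ≠ 0) →
      ∃! c : ℝ, r₁ < c ∧ c < r₂ ∧ (derivative (threeTermPoly β γ (n + 1))).eval c = 0) ∧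
    (∀ z : ℝ, (derivative (threeTermPoly β γ (n + 1))).eval z = 0 →
      (threeTermPoly β γ (n + 1)).eval z *
        (derivative (derivative (threeTermPoly β γ (n + 1)))).eval z < 0) := by
  have hdeg := (isMonicOfDegree_threeTermPoly β γ (n + 1)).natDegree_eq
  have hdeg0 : (threeTermPoly β γ (n + 1)).natDegree ≠ 0 := hdeg.trans_ne n.succ_ne_zero
  have hsplits := splits_threeTermPoly_succ (β := β) hγ
  have hsep := separable_threeTermPoly_succ (β := β) hγ
  refine ⟨?_, ?_, fun r₁ r₂ ↦ existsUnique_eval_derivative_eq_zero hsplits,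
    fun z ↦ eval_mul_eval_derivative_derivative_neg hsplits hsep hdeg0⟩
  · rw [ncard_setOf_eval_eq_zero hsplits hsep, hdeg]
  · rw [ncard_setOf_eval_eq_zero (splits_derivative hsplits)
      (separable_derivative hsplits hsep hdeg0), natDegree_derivative, hdeg, Nat.add_sub_cancel]

/-- The monic degree-`n0` polynomial `P_{n0}` has exactly `n0`
distinct real roots; its derivative has exactly `n0 − 1` distinct real roots, with
exactly one critical point strictly between each pair of consecutive roots of `P_{n0}`;
and every real critical point `z_c` of `P_{n0}` satisfies `P_{n0}(z_c)·P″_{n0}(z_c) < 0`. -/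
theorem statement_12 (n0 : ℕ) (hn0 : 2 ≤ n0) (a b : ℕ → ℝ)
    (ha : ∀ i, 1 ≤ i → i ≤ n0 → a i ≠ 0)
    (hb : ∀ j, j ≤ n0 → b j = b (n0 - j))
    (hpos : ∀ j, 1 ≤ j → j ≤ n0 → 0 < a j * a (n0 + 1 - j))
    (P : ℕ → Polynomial ℝ)
    (hP0 : P 0 = 1) (hP1 : P 1 = X - C (b 0))
    (hP : ∀ k, 2 ≤ k → k ≤ n0 + 1 →
      P k = (X - C (b (k - 1))) * P (k - 1) - C (a (k - 1) * a (n0 + 2 - k)) * P (k - 2))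
 :
    Set.ncard {x : ℝ | (P n0).eval x = 0} = n0 ∧
    Set.ncard {x : ℝ | (Polynomial.derivative (P n0)).eval x = 0} = n0 - 1 ∧
    (∀ r₁ r₂ : ℝ, (P n0).eval r₁ = 0 → (P n0).eval r₂ = 0 → r₁ < r₂ →
      (∀ x : ℝ, r₁ < x → x < r₂ → (P n0).eval x ≠ 0) →
      ∃! c : ℝ, r₁ < c ∧ c < r₂ ∧ (Polynomial.derivative (P n0)).eval c = 0) ∧
    (∀ zc : ℝ, (Polynomial.derivative (P n0)).eval zc = 0 →
      (P n0).eval zc * (Polynomial.derivative (Polynomial.derivative (P n0))).eval zc < 0) := by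
  obtain ⟨n, rfl⟩ := Nat.exists_eq_add_of_le' (one_le_two.trans hn0)
  have hPn : P (n + 1) = threeTermPoly b (fun k ↦ a (k + 1) * a (n + 1 - k)) (n + 1) :=
    eq_threeTermPoly hP0 hP1 fun k hk ↦ by simpa using hP (k + 2) (by omega) (by omega)
  rw [hPn]
  exact statement_12_general _ _ n fun k hk ↦ by simpa using hpos (k + 1) (by omega) (by omega)
end
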